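/- Let 0 < ε ≤ 2, let I be an instance with n agents and n objects, let p ∈ 𝕡, and let v be a valuation profile consistent with I that is unit-sum or unit-range. Set c = ⌈log(n²·(1/ε)) / log(1+ε/2)⌉ and t_k = (2/(2+ε))^k for k = 0,1,...,c (so t_0 = 1); for an edge e = (a_i, h_j) of G_I of rank r define value'(e) = t_k if there is k ∈ {1,...,c} with t_k ≤ v_i(h_j) and (k = 1 or v_i(h_j) < t_{k−1}), and value'(e) = 0 if v_i(h_j) < t_c, and set w_e = p_r + value'(e). Then every maximum-weight matching μ of G_I with respect to the weights (w_e) is a priority-p matching and satisfies SW(μ* | v) ≤ (1+ε)·SW(μ | v), where μ* is a priority-p matching of maximum social welfare under v. -/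

import Mathlib

open Finset
open scoped Classical

/-- A one-sided matching instance with `n` agents and `n` objects.  Agent `i` has a
nonempty acceptable set `accept i` and a weak order `pref i` on it
(`pref i h h'` means agent `i` weakly prefers object `h` to object `h'`). -/
structure OSMInstance (n : ℕ) where
  accept : Fin n → Finset (Fin n)
  accept_nonempty : ∀ i, (accept i).Nonempty
  pref : Fin n → Fin n → Fin n → Prop
  pref_refl : ∀ i h, h ∈ accept i → pref i h h
  pref_trans : ∀ i h₁ h₂ h₃, h₁ ∈ accept i → h₂ ∈ accept i → h₃ ∈ accept i →
    pref i h₁ h₂ → pref i h₂ h₃ → pref i h₁ h₃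
  pref_total : ∀ i h₁ h₂, h₁ ∈ accept i → h₂ ∈ accept i → pref i h₁ h₂ ∨ pref i h₂ h₁

namespace OSMInstance

variable {n : ℕ}

/-- Agent `i` strictly prefers object `h` to object `h'`. -/
def strictPref (I : OSMInstance n) (i h h' : Fin n) : Prop :=
  I.pref i h h' ∧ ¬ I.pref i h' h

/-- The rank of the edge `(i, h)` of `G_I`: one plus the number of acceptable objects
that agent `i` strictly prefers to `h`. -/
noncomputable def edgeRank (I : OSMInstance n) (e : Fin n × Fin n) : ℕ :=
  ((I.accept e.1).filter (fun h' => I.strictPref e.1 h' e.2)).card + 1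

/-- A matching of `G_I`: a set of acceptable (agent, object) pairs in which every agent
and every object occurs at most once. -/
def IsMatching (I : OSMInstance n) (μ : Finset (Fin n × Fin n)) : Prop :=
  (∀ e ∈ μ, e.2 ∈ I.accept e.1) ∧
  (∀ e ∈ μ, ∀ e' ∈ μ, e.1 = e'.1 → e = e') ∧
  (∀ e ∈ μ, ∀ e' ∈ μ, e.2 = e'.2 → e = e')

/-- Total weight of a set of edges under the edge weights `w`. -/
def weightSum (w : Fin n × Fin n → ℝ) (μ : Finset (Fin n × Fin n)) : ℝ :=
  ∑ e ∈ μ, w e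

/-- Social welfare of the set of edges `μ` under the valuation profile `v`. -/
def SW (_I : OSMInstance n) (v : Fin n → Fin n → ℝ) (μ : Finset (Fin n × Fin n)) : ℝ :=
  ∑ e ∈ μ, v e.1 e.2

/-- `μ` is a maximum-weight matching of `G_I` with respect to edge weights `w`. -/
def IsMaxWeightMatching (I : OSMInstance n) (w : Fin n × Fin n → ℝ)
    (μ : Finset (Fin n × Fin n)) : Prop :=
  I.IsMatching μ ∧ ∀ μ', I.IsMatching μ' → weightSum w μ' ≤ weightSum w μ

/-- `μ` is a priority-`p` matching: a maximum-weight matching when every rank-`r` edge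
gets weight `p r`. -/
noncomputable def IsPriorityMatching (I : OSMInstance n) (p : ℕ → ℝ)
    (μ : Finset (Fin n × Fin n)) : Prop :=
  I.IsMaxWeightMatching (fun e => p (I.edgeRank e)) μ

/-- `v` is a valuation profile consistent with the instance: values lie in `[0,1]`,
unacceptable objects have value `0`, and on acceptable objects the values represent
the weak order. -/
def Consistent (I : OSMInstance n) (v : Fin n → Fin n → ℝ) : Prop :=
  (∀ i h, 0 ≤ v i h ∧ v i h ≤ 1) ∧
  (∀ i h, h ∉ I.accept i → v i h = 0) ∧
  (∀ i h h', h ∈ I.accept i → h' ∈ I.accept i → (I.pref i h h' ↔ v i h' ≤ v i h))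

/-- Unit-sum valuations: each agent's values over acceptable objects sum to `1`. -/
def UnitSum (I : OSMInstance n) (v : Fin n → Fin n → ℝ) : Prop :=
  ∀ i, ∑ h ∈ I.accept i, v i h = 1

/-- Unit-range valuations: each agent values some acceptable object `1`, some
acceptable object `0`, and has two non-equivalent acceptable objects. -/
def UnitRange (I : OSMInstance n) (v : Fin n → Fin n → ℝ) : Prop :=
  ∀ i, (∃ h ∈ I.accept i, v i h = 1) ∧ (∃ h ∈ I.accept i, v i h = 0) ∧
    ∃ h ∈ I.accept i, ∃ h' ∈ I.accept i, I.strictPref i h h'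

/-- Agent `i` is unmatched in `μ`. -/
def Unmatched (_I : OSMInstance n) (μ : Finset (Fin n × Fin n)) (i : Fin n) : Prop :=
  ∀ h, (i, h) ∉ μ

/-- Agent `i` weakly prefers their allocation in `μ'` to their allocation in `μ`
(being unmatched is strictly worse than receiving any acceptable object). -/
def WeakImprove (I : OSMInstance n) (μ' μ : Finset (Fin n × Fin n)) (i : Fin n) : Prop :=
  I.Unmatched μ i ∨ ∃ h h', (i, h) ∈ μ ∧ (i, h') ∈ μ' ∧ I.pref i h' h

/-- Agent `i` strictly prefers their allocation in `μ'` to their allocation in `μ`. -/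
def StrictImprove (I : OSMInstance n) (μ' μ : Finset (Fin n × Fin n)) (i : Fin n) : Prop :=
  (I.Unmatched μ i ∧ ∃ h', (i, h') ∈ μ') ∨
    ∃ h h', (i, h) ∈ μ ∧ (i, h') ∈ μ' ∧ I.strictPref i h' h

/-- `μ` is a Pareto optimal matching of `G_I`. -/
def ParetoOptimal (I : OSMInstance n) (μ : Finset (Fin n × Fin n)) : Prop :=
  I.IsMatching μ ∧
    ¬ ∃ μ', I.IsMatching μ' ∧ (∀ i, I.WeakImprove μ' μ i) ∧ ∃ i, I.StrictImprove μ' μ i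

/-- `sig I μ r` is the number of rank-`r` edges of `μ` (as an integer). -/
noncomputable def sig (I : OSMInstance n) (μ : Finset (Fin n × Fin n)) (r : ℕ) : ℤ :=
  ((μ.filter (fun e => I.edgeRank e = r)).card : ℤ)

end OSMInstance

/-- Lexicographic comparison `f ≤ g` of the length-`len` tuples `(f 0, …, f (len-1))`
and `(g 0, …, g (len-1))`. -/
def LexLe (len : ℕ) (f g : ℕ → ℤ) : Prop :=
  (∀ j < len, f j = g j) ∨ ∃ j < len, (∀ i < j, f i = g i) ∧ f j < g j

namespace OSMInstance

variable {n : ℕ}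

/-- `μ` is a rank-maximal matching: it lexicographically maximizes `(s_1, …, s_n)`. -/
noncomputable def RankMaximal (I : OSMInstance n) (μ : Finset (Fin n × Fin n)) : Prop :=
  I.IsMatching μ ∧ ∀ μ', I.IsMatching μ' →
    LexLe n (fun j => I.sig μ' (j + 1)) (fun j => I.sig μ (j + 1))

/-- `μ` is a max-cardinality rank-maximal matching: it lexicographically maximizes
`(Σ_i s_i, s_1, …, s_n)`. -/
noncomputable def MaxCardRankMaximal (I : OSMInstance n) (μ : Finset (Fin n × Fin n)) : Prop :=
  I.IsMatching μ ∧ ∀ μ', I.IsMatching μ' →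
    LexLe (n + 1) (fun j => if j = 0 then (μ'.card : ℤ) else I.sig μ' j)
      (fun j => if j = 0 then (μ.card : ℤ) else I.sig μ j)

/-- `μ` is a fair matching: it lexicographically maximizes
`(Σ_i s_i, -s_n, -s_(n-1), …, -s_1)`. -/
noncomputable def FairMatching (I : OSMInstance n) (μ : Finset (Fin n × Fin n)) : Prop :=
  I.IsMatching μ ∧ ∀ μ', I.IsMatching μ' →
    LexLe (n + 1) (fun j => if j = 0 then (μ'.card : ℤ) else -I.sig μ' (n + 1 - j))
      (fun j => if j = 0 then (μ.card : ℤ) else -I.sig μ (n + 1 - j))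

end OSMInstance

/-- The priority vector for rank-maximal matchings: a rank-`r` edge gets weight
`n ^ (2 * (n - r + 1))`. -/
noncomputable def pRankMaximal (n : ℕ) : ℕ → ℝ :=
  fun r => (n : ℝ) ^ (2 * (n - r + 1))

/-- The priority vector for max-cardinality rank-maximal matchings: a rank-`r` edge gets
weight `n ^ (2 * n) + n ^ (2 * (n - r))`. -/
noncomputable def pMaxCardRankMaximal (n : ℕ) : ℕ → ℝ :=
  fun r => (n : ℝ) ^ (2 * n) + (n : ℝ) ^ (2 * (n - r))

/-- The priority vector for fair matchings: a rank-`r` edge gets weight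
`4 * n ^ (2 * n) - 2 * n ^ (r - 1)`. -/
noncomputable def pFairVec (n : ℕ) : ℕ → ℝ :=
  fun r => 4 * (n : ℝ) ^ (2 * n) - 2 * (n : ℝ) ^ (r - 1)

/-- The set `𝕡` of the three priority vectors of interest. -/
noncomputable def PrioritySet (n : ℕ) : Set (ℕ → ℝ) :=
  {pRankMaximal n, pMaxCardRankMaximal n, pFairVec n}

/-- The four matching properties considered: Pareto optimal, rank-maximal,
max-cardinality rank-maximal, and fair. -/
inductive MatchProp where
  | po | rm | mcrm | fair

/-- `μ` satisfies the property `X` with respect to the instance `I`. -/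
noncomputable def SatisfiesProp {n : ℕ} (X : MatchProp) (I : OSMInstance n)
    (μ : Finset (Fin n × Fin n)) : Prop :=
  match X with
  | .po => I.ParetoOptimal μ
  | .rm => I.RankMaximal μ
  | .mcrm => I.MaxCardRankMaximal μ
  | .fair => I.FairMatching μ

namespace OSMInstance

variable {n : ℕ}

lemma one_le_edgeRank (I : OSMInstance n) (e : Fin n × Fin n) : 1 ≤ I.edgeRank e :=
  Nat.le_add_left _ _

lemma edgeRank_le (I : OSMInstance n) (e : Fin n × Fin n) :
    I.edgeRank e ≤ n := by
  have h : ((I.accept e.1).filter (fun h' => I.strictPref e.1 h' e.2)) ⊂ univ := by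
    refine Finset.ssubset_univ_iff.2 fun h => ?_
    have : e.2 ∈ (I.accept e.1).filter (fun h' => I.strictPref e.1 h' e.2) := h ▸ mem_univ _
    have h2 := (mem_filter.1 this).2
    exact h2.2 h2.1
  have := Finset.card_lt_card h
  simp only [card_univ, Fintype.card_fin] at this
  exact this

lemma strictPref_iff (I : OSMInstance n) {v : Fin n → Fin n → ℝ} (hv : I.Consistent v)
    {i h h' : Fin n} (hh : h ∈ I.accept i) (hh' : h' ∈ I.accept i) :
    I.strictPref i h h' ↔ v i h' < v i h := by
  unfold strictPref
  rw [hv.2.2 i h h' hh hh', hv.2.2 i h' h hh' hh]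
  exact ⟨fun h => not_le.1 h.2, fun h => ⟨h.le, not_le.2 h⟩⟩

lemma edgeRank_eq_card (I : OSMInstance n) {v : Fin n → Fin n → ℝ} (hv : I.Consistent v)
    {i h : Fin n} (hh : h ∈ I.accept i) :
    I.edgeRank (i, h) = ((I.accept i).filter (fun h' => v i h < v i h')).card + 1 := by
  unfold edgeRank
  congr 2
  exact filter_congr fun h' hh' => I.strictPref_iff hv hh' hh

lemma edgeRank_eq_one_iff (I : OSMInstance n) {v : Fin n → Fin n → ℝ} (hv : I.Consistent v)
    {i h : Fin n} (hh : h ∈ I.accept i) :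
    I.edgeRank (i, h) = 1 ↔ ∀ h' ∈ I.accept i, v i h' ≤ v i h := by
  rw [I.edgeRank_eq_card hv hh]
  simp [filter_eq_empty_iff]

lemma exists_edgeRank_eq_one (I : OSMInstance n) {v : Fin n → Fin n → ℝ} (hv : I.Consistent v)
    (i : Fin n) : ∃ h ∈ I.accept i, I.edgeRank (i, h) = 1 := by
  obtain ⟨h, hh, hmax⟩ := Finset.exists_max_image _ (v i) (I.accept_nonempty i)
  exact ⟨h, hh, (I.edgeRank_eq_one_iff hv hh).2 hmax⟩

lemma IsMatching.card_le {I : OSMInstance n} {μ : Finset (Fin n × Fin n)}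
    (hμ : I.IsMatching μ) : μ.card ≤ n := by
  have := Finset.card_le_card_of_injOn (s := μ) (t := univ) Prod.fst
    (fun _ _ => mem_coe.2 (mem_univ _))
    (fun e he e' he' h => hμ.2.1 e he e' he' h)
  simpa using this

/-- Every matching extends to a bijection between agents and objects. -/
lemma IsMatching.exists_perm {I : OSMInstance n} {μ : Finset (Fin n × Fin n)}
    (hμ : I.IsMatching μ) : ∃ σ : Fin n ≃ Fin n, ∀ e ∈ μ, σ e.1 = e.2 := by
  set f : Fin n → Fin n := fun i => if h : ∃ k, (i, k) ∈ μ then h.choose else i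
  have hfe : ∀ e ∈ μ, f e.1 = e.2 := by
    intro e he
    have h : ∃ k, (e.1, k) ∈ μ := ⟨e.2, he⟩
    have h1 : f e.1 = h.choose := dif_pos h
    rw [h1]
    exact congrArg Prod.snd (hμ.2.1 _ h.choose_spec e he rfl)
  obtain ⟨g, hg⟩ := Finset.exists_equiv_extend_of_card_eq (α := Fin n) (t := univ) (by simp)
    (s := μ.image Prod.fst) (f := f) (subset_univ _) (by
      intro i hi j hj hij
      obtain ⟨e, he, rfl⟩ := mem_image.1 (mem_coe.1 hi)
      obtain ⟨e', he', rfl⟩ := mem_image.1 (mem_coe.1 hj)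
      rw [hfe e he, hfe e' he'] at hij
      rw [hμ.2.2 e he e' he' hij])
  refine ⟨g.trans (Equiv.subtypeUnivEquiv fun x => mem_univ x), fun e he => ?_⟩
  simpa [hfe e he] using hg e.1 (mem_image_of_mem _ he)

end OSMInstance

/-- A self-map of a nonempty finite type permutes some nonempty set. -/
lemma exists_nonempty_image_eq {α : Type*} [Fintype α] [DecidableEq α] [Nonempty α]
    (g : α → α) : ∃ C : Finset α, C.Nonempty ∧ C.image g = C := by
  obtain ⟨C, hC⟩ := (Set.toFinite {C : Finset α | C.Nonempty ∧ C.image g ⊆ C}).exists_minimal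
    ⟨univ, univ_nonempty, subset_univ _⟩
  exact ⟨C, hC.1.1, hC.eq_of_le ⟨hC.1.1.image g, image_subset_image hC.1.2⟩ hC.1.2⟩

namespace OSMInstance

variable {n : ℕ}

/-- If every agent points at an acceptable object `τ i`, then some nonempty group of agents
can trade the objects assigned to them by (an extension `σ` of) the matching `μ` so that
each member obtains the object pointed at. -/
lemma IsMatching.exists_exchange [Nonempty (Fin n)] {I : OSMInstance n}
    {μ : Finset (Fin n × Fin n)} (hμ : I.IsMatching μ) (τ : Fin n → Fin n)
    (hτ : ∀ i, τ i ∈ I.accept i) :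
    ∃ (C : Finset (Fin n)) (σ : Fin n ≃ Fin n) (μ' : Finset (Fin n × Fin n)),
      C.Nonempty ∧ (∀ e ∈ μ, σ e.1 = e.2) ∧ C.image τ = C.image σ ∧ I.IsMatching μ' ∧
      ∀ f : Fin n × Fin n → ℝ,
        weightSum f μ' + ∑ i ∈ C, (if (i, σ i) ∈ μ then f (i, σ i) else 0) =
          weightSum f μ + ∑ i ∈ C, f (i, τ i) := by
  obtain ⟨σ, hσ⟩ := hμ.exists_perm
  obtain ⟨C, hCne, hC⟩ := exists_nonempty_image_eq (fun i => σ.symm (τ i))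
  have himg : C.image τ = C.image σ := by
    conv_rhs => rw [← hC, image_image]
    exact image_congr fun i _ => by simp
  have hinj : Set.InjOn τ C := by
    rw [← Finset.card_image_iff, himg, card_image_of_injective _ σ.injective]
  have hdisj : ∀ i ∈ C, ∀ e ∈ μ, e.1 ∉ C → τ i ≠ e.2 := by
    intro i hi e he heC h
    have : τ i ∈ C.image σ := himg ▸ mem_image_of_mem τ hi
    obtain ⟨j, hj, hji⟩ := mem_image.1 this
    rw [h, ← hσ e he] at hji
    exact heC (σ.injective hji ▸ hj)
  refine ⟨C, σ, C.image (fun i => (i, τ i)) ∪ μ.filter (fun e => e.1 ∉ C), hCne, hσ, himg,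
    ⟨?_, ?_, ?_⟩, ?_⟩
  · intro e he
    rcases mem_union.1 he with he | he
    · obtain ⟨i, -, rfl⟩ := mem_image.1 he
      exact hτ i
    · exact hμ.1 e (mem_filter.1 he).1
  · intro e he e' he' h
    rcases mem_union.1 he with he | he <;> rcases mem_union.1 he' with he' | he'
    · obtain ⟨i, hi, rfl⟩ := mem_image.1 he
      obtain ⟨j, hj, rfl⟩ := mem_image.1 he'
      simp only at h
      rw [h]
    · obtain ⟨i, hi, rfl⟩ := mem_image.1 he
      simp only at h
      exact absurd (h ▸ hi) (mem_filter.1 he').2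
    · obtain ⟨i, hi, rfl⟩ := mem_image.1 he'
      simp only at h
      exact absurd (h ▸ hi) (mem_filter.1 he).2
    · exact hμ.2.1 e (mem_filter.1 he).1 e' (mem_filter.1 he').1 h
  · intro e he e' he' h
    rcases mem_union.1 he with he | he <;> rcases mem_union.1 he' with he' | he'
    · obtain ⟨i, hi, rfl⟩ := mem_image.1 he
      obtain ⟨j, hj, rfl⟩ := mem_image.1 he'
      rw [hinj (mem_coe.2 hi) (mem_coe.2 hj) h]
    · obtain ⟨i, hi, rfl⟩ := mem_image.1 he
      exact absurd h (hdisj i hi e' (mem_filter.1 he').1 (mem_filter.1 he').2)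
    · obtain ⟨i, hi, rfl⟩ := mem_image.1 he'
      exact absurd h.symm (hdisj i hi e (mem_filter.1 he).1 (mem_filter.1 he).2)
    · exact hμ.2.2 e (mem_filter.1 he).1 e' (mem_filter.1 he').1 h
  · intro f
    unfold weightSum
    rw [sum_union, sum_image (fun i _ j _ h => congrArg Prod.fst h)]
    · rw [← sum_filter_add_sum_filter_not μ (fun e => e.1 ∈ C) f]
      have : ∑ i ∈ C, (if (i, σ i) ∈ μ then f (i, σ i) else 0) =
          ∑ e ∈ μ.filter (fun e => e.1 ∈ C), f e := by
        rw [← sum_filter]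
        refine sum_bij' (fun i _ => (i, σ i)) (fun e _ => e.1) ?_ ?_ ?_ ?_ ?_
        · intro i hi
          exact mem_filter.2 ⟨(mem_filter.1 hi).2, (mem_filter.1 hi).1⟩
        · intro e he
          refine mem_filter.2 ⟨(mem_filter.1 he).2, ?_⟩
          rw [hσ e (mem_filter.1 he).1]
          exact (mem_filter.1 he).1
        · intro i _
          rfl
        · intro e he
          rw [hσ e (mem_filter.1 he).1]
        · intro i _
          rfl
      rw [this]
      ring
    · rw [disjoint_left]
      intro e he he'
      obtain ⟨i, hi, rfl⟩ := mem_image.1 he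
      exact (mem_filter.1 he').2 hi

/-- A priority matching contains an edge of rank one. -/
lemma IsPriorityMatching.exists_edgeRank_eq_one [Nonempty (Fin n)] {I : OSMInstance n}
    {p : ℕ → ℝ} (hanti : ∀ r s, 1 ≤ r → r < s → s ≤ n → p s < p r)
    (hpos : ∀ r, 1 ≤ r → r ≤ n → 0 < p r)
    (htop : ∀ i, ∃ h ∈ I.accept i, I.edgeRank (i, h) = 1)
    {μ : Finset (Fin n × Fin n)} (hμ : I.IsPriorityMatching p μ) :
    ∃ e ∈ μ, I.edgeRank e = 1 := by
  by_contra! hno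
  choose τ hτ hτ1 using htop
  obtain ⟨C, σ, μ', hC, hσ, -, hμ', hw⟩ := hμ.1.exists_exchange τ hτ
  have h1 := hw (fun e => p (I.edgeRank e))
  have h2 := hμ.2 μ' hμ'
  have h3 : ∑ i ∈ C, (if (i, σ i) ∈ μ then p (I.edgeRank (i, σ i)) else 0) <
      ∑ i ∈ C, p (I.edgeRank (i, τ i)) := by
    refine sum_lt_sum_of_nonempty hC fun i _ => ?_
    rw [hτ1 i]
    split_ifs with h
    · have := I.one_le_edgeRank (i, σ i)
      exact hanti _ _ le_rfl (lt_of_le_of_ne this (hno _ h).symm) (I.edgeRank_le _)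
    · exact hpos 1 le_rfl (Fin.pos i)
  linarith

/-- If a priority matching has a single rank-one edge `(a, h)` and `k` is a next-best object of
`a`, then `k` is held by an agent `j` as an object of rank two, and `a` and `j` can
trade in such a way that `j` receives a top object. -/
lemma IsPriorityMatching.exists_swap {I : OSMInstance n}
    {p : ℕ → ℝ} (hanti : ∀ r s, 1 ≤ r → r < s → s ≤ n → p s < p r)
    (hpos : ∀ r, 1 ≤ r → r ≤ n → 0 < p r)
    (htop : ∀ i, ∃ h ∈ I.accept i, I.edgeRank (i, h) = 1)
    {μ : Finset (Fin n × Fin n)} (hμ : I.IsPriorityMatching p μ) {a h k : Fin n}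
    (hah : (a, h) ∈ μ) (hrank : I.edgeRank (a, h) = 1)
    (huniq : ∀ e ∈ μ, I.edgeRank e = 1 → e = (a, h))
    (hk : k ∈ I.accept a) (hkh : k ≠ h) (hkrank : I.edgeRank (a, k) ≤ 2) :
    ∃ j y μ', j ≠ a ∧ (j, k) ∈ μ ∧ I.edgeRank (j, k) = 2 ∧ y ∈ I.accept j ∧
      I.edgeRank (j, y) = 1 ∧ I.IsMatching μ' ∧
      ∀ f : Fin n × Fin n → ℝ, weightSum f μ' + (f (a, h) + f (j, k)) =
        weightSum f μ + (f (a, k) + f (j, y)) := by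
  have hn2 : 2 ≤ n := by
    by_contra hlt
    exact hkh (Fin.ext (by omega))
  have : Nonempty (Fin n) := ⟨a⟩
  choose top htop htop1 using htop
  set τ : Fin n → Fin n := Function.update top a k
  have hτa : τ a = k := Function.update_self _ _ _
  have hτne : ∀ i, i ≠ a → τ i = top i := fun i hi => Function.update_of_ne hi _ _
  have hτ : ∀ i, τ i ∈ I.accept i := by
    intro i
    by_cases hi : i = a
    · subst hi; rw [hτa]; exact hk
    · rw [hτne i hi]; exact htop i
  obtain ⟨C, σ, μ', hC, hσ, himg, hμ', hw⟩ := hμ.1.exists_exchange τ hτ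
  have h1 := hw (fun e => p (I.edgeRank e))
  have h2 := hμ.2 μ' hμ'
  have hσa : σ a = h := hσ _ hah
  have h12 : p 2 < p 1 := hanti 1 2 le_rfl (by norm_num) hn2
  have hle2 : ∀ i, i ≠ a →
      (if (i, σ i) ∈ μ then p (I.edgeRank (i, σ i)) else 0) ≤ p 2 := by
    intro i hi
    split_ifs with hm
    · have hr1 : I.edgeRank (i, σ i) ≠ 1 := fun hr => hi (congrArg Prod.fst (huniq _ hm hr))
      have hr2 := I.one_le_edgeRank (i, σ i)
      rcases eq_or_lt_of_le (show 2 ≤ I.edgeRank (i, σ i) by omega) with hr | hr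
      · rw [← hr]
      · exact (hanti _ _ (by norm_num) hr (I.edgeRank_le _)).le
    · exact (hpos 2 (by norm_num) hn2).le
  have hτ1 : ∀ i, i ≠ a → p (I.edgeRank (i, τ i)) = p 1 := fun i hi => by
    rw [hτne i hi, htop1]
  have haC : a ∈ C := by
    by_contra haC
    have h3 : ∑ i ∈ C, (if (i, σ i) ∈ μ then p (I.edgeRank (i, σ i)) else 0) <
        ∑ i ∈ C, p (I.edgeRank (i, τ i)) := by
      refine sum_lt_sum_of_nonempty hC fun i hi => ?_
      have hia : i ≠ a := fun h => haC (h ▸ hi)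
      rw [hτ1 i hia]
      exact (hle2 i hia).trans_lt h12
    linarith
  have hk2 : p 2 ≤ p (I.edgeRank (a, k)) := by
    rcases eq_or_lt_of_le hkrank with hr | hr
    · rw [hr]
    · exact (hanti _ _ (I.one_le_edgeRank _) hr hn2).le
  have hD : (C.erase a).Nonempty := by
    rw [nonempty_iff_ne_empty]
    intro hD
    have hCa : C = {a} := by
      rw [← insert_erase haC, hD]; rfl
    rw [hCa, image_singleton, image_singleton, hτa, hσa] at himg
    exact hkh (singleton_injective himg)
  rw [← add_sum_erase C _ haC, ← add_sum_erase C _ haC] at h1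
  simp only [hσa, hah, if_true, hrank, hτa] at h1
  have hs1 : ∑ i ∈ C.erase a, p (I.edgeRank (i, τ i)) = (C.erase a).card * p 1 := by
    rw [sum_congr rfl (fun i hi => hτ1 i (ne_of_mem_erase hi)), sum_const, nsmul_eq_mul]
  have hs2 : ∑ i ∈ C.erase a, (if (i, σ i) ∈ μ then p (I.edgeRank (i, σ i)) else 0) ≤
      (C.erase a).card * p 2 := by
    rw [← nsmul_eq_mul]
    exact sum_le_card_nsmul _ _ _ fun i hi => hle2 i (ne_of_mem_erase hi)
  have hcard : (C.erase a).card = 1 := by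
    refine le_antisymm ?_ hD.card_pos
    by_contra! hlt
    have : (2 : ℝ) ≤ (C.erase a).card := by exact_mod_cast hlt
    nlinarith
  obtain ⟨j, hj⟩ := card_eq_one.1 hcard
  have hja : j ≠ a := ne_of_mem_erase (hj ▸ mem_singleton_self j)
  have hCeq : C = {a, j} := by rw [← insert_erase haC, hj]
  rw [hcard] at hs1
  rw [hs1, hj, sum_singleton] at h1
  have hkj : k = σ j := by
    have : k ∈ C.image σ := by
      rw [← himg, ← hτa]
      exact mem_image_of_mem _ haC
    rw [hCeq, image_insert, image_singleton, mem_insert, mem_singleton, hσa] at this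
    exact this.resolve_left hkh
  have hjm : p 2 ≤ if (j, σ j) ∈ μ then p (I.edgeRank (j, σ j)) else 0 := by
    push_cast at h1
    linarith
  have hmem : (j, σ j) ∈ μ := by
    by_contra hm
    rw [if_neg hm] at hjm
    exact absurd (hpos 2 (by norm_num) hn2) (not_lt.2 hjm)
  rw [if_pos hmem] at hjm
  have hjr : I.edgeRank (j, σ j) = 2 := by
    have hr1 : I.edgeRank (j, σ j) ≠ 1 := fun hr => hja (congrArg Prod.fst (huniq _ hmem hr))
    have hr2 := I.one_le_edgeRank (j, σ j)
    by_contra hr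
    exact absurd (hanti 2 _ (by norm_num) (by omega) (I.edgeRank_le _))
      (not_lt.2 hjm)
  refine ⟨j, top j, μ', hja, hkj ▸ hmem, hkj ▸ hjr, htop j, htop1 j, hμ', fun f => ?_⟩
  have hf := hw f
  rw [hCeq, sum_pair hja.symm, sum_pair hja.symm, hσa, if_pos hah, if_pos hmem, hτa, ← hkj,
    hτne j hja] at hf
  exact hf

/-! ### Gaps between priority weights -/

lemma weight_gap_of_dvd (I : OSMInstance n) (q : ℕ → ℤ) (a d : ℤ) (hd : (n : ℤ) ≤ d)
    (hq : ∀ r, 1 ≤ r → r ≤ n → d ∣ q r - a) {μ μ' : Finset (Fin n × Fin n)}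
    (hcard : a = 0 ∨ μ.card = μ'.card)
    (hlt : ∑ e ∈ μ, q (I.edgeRank e) < ∑ e ∈ μ', q (I.edgeRank e)) :
    ∑ e ∈ μ, q (I.edgeRank e) + n ≤ ∑ e ∈ μ', q (I.edgeRank e) := by
  have key : ∀ ν : Finset (Fin n × Fin n), d ∣ ∑ e ∈ ν, q (I.edgeRank e) - ν.card * a := by
    intro ν
    have : ∑ e ∈ ν, q (I.edgeRank e) - ν.card * a = ∑ e ∈ ν, (q (I.edgeRank e) - a) := by
      simp [sum_sub_distrib]
    rw [this]
    exact dvd_sum fun e _ => hq _ (I.one_le_edgeRank e) (I.edgeRank_le _)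
  have hdvd := dvd_sub (key μ') (key μ)
  have heq : (μ.card : ℤ) * a = μ'.card * a := by
    rcases hcard with h | h <;> simp [h]
  have := Int.le_of_dvd (by linarith) hdvd
  linarith

lemma weight_gap_of_bounds (I : OSMInstance n) (q : ℕ → ℤ) (L U : ℤ) (hL : 0 ≤ L) (hLU : L ≤ U)
    (hgap : (n : ℤ) ≤ L - (n - 1) * (U - L))
    (hq : ∀ r, 1 ≤ r → r ≤ n → L ≤ q r ∧ q r ≤ U) {μ μ' : Finset (Fin n × Fin n)}
    (hμ' : I.IsMatching μ') (hcard : μ.card < μ'.card) :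
    ∑ e ∈ μ, q (I.edgeRank e) + n ≤ ∑ e ∈ μ', q (I.edgeRank e) := by
  have h1 : ∑ e ∈ μ, q (I.edgeRank e) ≤ μ.card * U := by
    rw [← nsmul_eq_mul]
    exact sum_le_card_nsmul _ _ _ fun e he =>
      (hq _ (I.one_le_edgeRank e) (I.edgeRank_le _)).2
  have h2 : μ'.card * L ≤ ∑ e ∈ μ', q (I.edgeRank e) := by
    rw [← nsmul_eq_mul]
    exact card_nsmul_le_sum _ _ _ fun e he =>
      (hq _ (I.one_le_edgeRank e) (I.edgeRank_le _)).1
  have h3 : (μ.card : ℤ) + 1 ≤ μ'.card := by exact_mod_cast hcard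
  have h4 : (μ.card : ℤ) + 1 ≤ n := by exact_mod_cast hcard.trans_le hμ'.card_le
  nlinarith [mul_le_mul_of_nonneg_right h3 hL,
    mul_le_mul_of_nonneg_right h4 (sub_nonneg.2 hLU)]

lemma weight_gap (I : OSMInstance n) (q : ℕ → ℤ) (a d L U : ℤ) (hd : (n : ℤ) ≤ d)
    (hdvd : ∀ r, 1 ≤ r → r ≤ n → d ∣ q r - a) (hL : 0 ≤ L) (hLU : L ≤ U)
    (hgap : (n : ℤ) ≤ L - (n - 1) * (U - L))
    (hq : ∀ r, 1 ≤ r → r ≤ n → L ≤ q r ∧ q r ≤ U) {μ μ' : Finset (Fin n × Fin n)}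
    (hμ : I.IsMatching μ) (hμ' : I.IsMatching μ')
    (hlt : ∑ e ∈ μ, q (I.edgeRank e) < ∑ e ∈ μ', q (I.edgeRank e)) :
    ∑ e ∈ μ, q (I.edgeRank e) + n ≤ ∑ e ∈ μ', q (I.edgeRank e) := by
  rcases lt_trichotomy μ.card μ'.card with h | h | h
  · exact I.weight_gap_of_bounds q L U hL hLU hgap hq hμ' h
  · exact I.weight_gap_of_dvd q a d hd hdvd (Or.inr h) hlt
  · have := I.weight_gap_of_bounds q L U hL hLU hgap hq hμ h
    have : (0 : ℤ) ≤ n := by positivity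
    linarith

lemma weight_gap_of_intCast (I : OSMInstance n) {p : ℕ → ℝ} (q : ℕ → ℤ) (hpq : ∀ r, p r = q r)
    {μ μ' : Finset (Fin n × Fin n)}
    (hgap : ∑ e ∈ μ, q (I.edgeRank e) < ∑ e ∈ μ', q (I.edgeRank e) →
      ∑ e ∈ μ, q (I.edgeRank e) + n ≤ ∑ e ∈ μ', q (I.edgeRank e))
    (hlt : weightSum (fun e => p (I.edgeRank e)) μ < weightSum (fun e => p (I.edgeRank e)) μ') :
    weightSum (fun e => p (I.edgeRank e)) μ + n ≤ weightSum (fun e => p (I.edgeRank e)) μ' := by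
  simp only [weightSum, hpq] at hlt ⊢
  exact_mod_cast hgap (by exact_mod_cast hlt)

lemma pRankMaximal_weight_gap (I : OSMInstance n) (hn0 : n ≠ 0)
    {μ μ' : Finset (Fin n × Fin n)}
    (hlt : weightSum (fun e => pRankMaximal n (I.edgeRank e)) μ <
      weightSum (fun e => pRankMaximal n (I.edgeRank e)) μ') :
    weightSum (fun e => pRankMaximal n (I.edgeRank e)) μ + n ≤
      weightSum (fun e => pRankMaximal n (I.edgeRank e)) μ' := by
  have hn1 : (1 : ℤ) ≤ n := by exact_mod_cast Nat.one_le_iff_ne_zero.2 hn0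
  refine I.weight_gap_of_intCast (fun r => (n : ℤ) ^ (2 * (n - r + 1)))
    (fun r => by simp [pRankMaximal]) (fun h => ?_) hlt
  refine I.weight_gap_of_dvd (fun r => (n : ℤ) ^ (2 * (n - r + 1))) 0 ((n : ℤ) ^ 2)
    (by nlinarith) (fun r _ _ => ?_) (Or.inl rfl) h
  rw [sub_zero]
  exact pow_dvd_pow _ (by omega)

lemma pMaxCardRankMaximal_weight_gap (I : OSMInstance n) (hn0 : n ≠ 0)
    {μ μ' : Finset (Fin n × Fin n)} (hμ : I.IsMatching μ) (hμ' : I.IsMatching μ')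
    (hlt : weightSum (fun e => pMaxCardRankMaximal n (I.edgeRank e)) μ <
      weightSum (fun e => pMaxCardRankMaximal n (I.edgeRank e)) μ') :
    weightSum (fun e => pMaxCardRankMaximal n (I.edgeRank e)) μ + n ≤
      weightSum (fun e => pMaxCardRankMaximal n (I.edgeRank e)) μ' := by
  have hn1 : (1 : ℤ) ≤ n := by exact_mod_cast Nat.one_le_iff_ne_zero.2 hn0
  refine I.weight_gap_of_intCast (fun r => (n : ℤ) ^ (2 * n) + (n : ℤ) ^ (2 * (n - r)))
    (fun r => by simp [pMaxCardRankMaximal]) (fun h => ?_) hlt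
  rcases eq_or_ne n 1 with rfl | hne
  · refine I.weight_gap
      (fun r => ((1 : ℕ) : ℤ) ^ (2 * 1) + ((1 : ℕ) : ℤ) ^ (2 * (1 - r))) 0 1 2 2 (by simp)
      (fun r _ _ => one_dvd _) (by simp) le_rfl (by simp) (fun r _ _ => ?_) hμ hμ' h
    simp
  have hn2 : (2 : ℤ) ≤ n := by exact_mod_cast (by omega : 2 ≤ n)
  have hN : (n : ℤ) ^ (2 * n) = (n : ℤ) ^ (2 * (n - 1)) * (n : ℤ) ^ 2 := by
    rw [← pow_add]; congr 1; omega
  have hM : (1 : ℤ) ≤ (n : ℤ) ^ (2 * (n - 1)) := one_le_pow₀ hn1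
  refine I.weight_gap (fun r => (n : ℤ) ^ (2 * n) + (n : ℤ) ^ (2 * (n - r)))
    ((n : ℤ) ^ (2 * n) + 1) ((n : ℤ) ^ 2 - 1) ((n : ℤ) ^ (2 * n))
    ((n : ℤ) ^ (2 * n) + (n : ℤ) ^ (2 * (n - 1))) (by nlinarith) (fun r _ _ => ?_)
    (by positivity) (by linarith) ?_ (fun r hr _ => ⟨?_, ?_⟩) hμ hμ' h
  · have := sub_one_dvd_pow_sub_one ((n : ℤ) ^ 2) (n - r)
    rw [← pow_mul] at this
    simpa using this
  · rw [hN]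
    nlinarith [mul_le_mul_of_nonneg_right hM (by nlinarith : (0 : ℤ) ≤ (n : ℤ) ^ 2 - n + 1)]
  · have : (0 : ℤ) ≤ (n : ℤ) ^ (2 * (n - r)) := by positivity
    linarith
  · have : (n : ℤ) ^ (2 * (n - r)) ≤ (n : ℤ) ^ (2 * (n - 1)) :=
      pow_le_pow_right₀ hn1 (by omega)
    linarith

lemma pFairVec_weight_gap (I : OSMInstance n) (hn0 : n ≠ 0)
    {μ μ' : Finset (Fin n × Fin n)} (hμ : I.IsMatching μ) (hμ' : I.IsMatching μ')
    (hlt : weightSum (fun e => pFairVec n (I.edgeRank e)) μ <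
      weightSum (fun e => pFairVec n (I.edgeRank e)) μ') :
    weightSum (fun e => pFairVec n (I.edgeRank e)) μ + n ≤
      weightSum (fun e => pFairVec n (I.edgeRank e)) μ' := by
  have hn1 : (1 : ℤ) ≤ n := by exact_mod_cast Nat.one_le_iff_ne_zero.2 hn0
  refine I.weight_gap_of_intCast (fun r => 4 * (n : ℤ) ^ (2 * n) - 2 * (n : ℤ) ^ (r - 1))
    (fun r => by simp [pFairVec]) (fun h => ?_) hlt
  rcases eq_or_ne n 1 with rfl | hne
  · refine I.weight_gap
      (fun r => 4 * ((1 : ℕ) : ℤ) ^ (2 * 1) - 2 * ((1 : ℕ) : ℤ) ^ (r - 1)) 0 1 2 2 (by simp)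
      (fun r _ _ => one_dvd _) (by simp) le_rfl (by simp) (fun r _ _ => ?_) hμ hμ' h
    simp
  have hn2 : (2 : ℤ) ≤ n := by exact_mod_cast (by omega : 2 ≤ n)
  have hK : (n : ℤ) ^ n = (n : ℤ) ^ (n - 1) * n := by
    rw [← pow_succ]; congr 1; omega
  have hKN : (n : ℤ) ^ n ≤ (n : ℤ) ^ (2 * n) := pow_le_pow_right₀ hn1 (by omega)
  have hnK : (n : ℤ) ≤ (n : ℤ) ^ n := le_self_pow₀ hn1 hn0
  have hM : (1 : ℤ) ≤ (n : ℤ) ^ (n - 1) := one_le_pow₀ hn1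
  have hMK : (n : ℤ) ^ (n - 1) ≤ (n : ℤ) ^ n := pow_le_pow_right₀ hn1 (by omega)
  refine I.weight_gap (fun r => 4 * (n : ℤ) ^ (2 * n) - 2 * (n : ℤ) ^ (r - 1))
    (4 * (n : ℤ) ^ (2 * n) - 2) (2 * (n - 1))
    (4 * (n : ℤ) ^ (2 * n) - 2 * (n : ℤ) ^ (n - 1)) (4 * (n : ℤ) ^ (2 * n) - 2)
    (by linarith) (fun r _ _ => ?_)
    (by linarith) (by linarith) ?_ (fun r hr hrn => ⟨?_, ?_⟩) hμ hμ' h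
  · have := mul_dvd_mul_left (2 : ℤ) (sub_one_dvd_pow_sub_one (n : ℤ) (r - 1))
    rw [← dvd_neg]
    convert this using 1
    ring
  · nlinarith
  · have : (n : ℤ) ^ (r - 1) ≤ (n : ℤ) ^ (n - 1) := pow_le_pow_right₀ hn1 (by omega)
    linarith
  · have : (1 : ℤ) ≤ (n : ℤ) ^ (r - 1) := one_le_pow₀ hn1
    linarith

/-- The priority weights of two matchings are equal or differ by at least `n`. -/
lemma priority_weight_gap (I : OSMInstance n) {p : ℕ → ℝ} (hp : p ∈ PrioritySet n)
    {μ μ' : Finset (Fin n × Fin n)} (hμ : I.IsMatching μ) (hμ' : I.IsMatching μ')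
    (hlt : weightSum (fun e => p (I.edgeRank e)) μ < weightSum (fun e => p (I.edgeRank e)) μ') :
    weightSum (fun e => p (I.edgeRank e)) μ + n ≤ weightSum (fun e => p (I.edgeRank e)) μ' := by
  have hn0 : n ≠ 0 := by
    rintro rfl
    rw [Subsingleton.elim μ μ'] at hlt
    exact lt_irrefl _ hlt
  rcases hp with rfl | rfl | rfl
  · exact I.pRankMaximal_weight_gap hn0 hlt
  · exact I.pMaxCardRankMaximal_weight_gap hn0 hμ hμ' hlt
  · exact I.pFairVec_weight_gap hn0 hμ hμ' hlt

end OSMInstance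

lemma PrioritySet.strictAnti {n : ℕ} {p : ℕ → ℝ} (hp : p ∈ PrioritySet n) (r s : ℕ) (hr : 1 ≤ r)
    (hrs : r < s) (hs : s ≤ n) : p s < p r := by
  have hn : (1 : ℝ) < n := by exact_mod_cast (by omega : 1 < n)
  rcases hp with rfl | rfl | rfl
  · exact pow_lt_pow_right₀ hn (by omega)
  · exact add_lt_add_right (pow_lt_pow_right₀ hn (by omega)) _
  · have : (n : ℝ) ^ (r - 1) < (n : ℝ) ^ (s - 1) := pow_lt_pow_right₀ hn (by omega)
    simp only [pFairVec]
    linarith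

lemma PrioritySet.pos {n : ℕ} {p : ℕ → ℝ} (hp : p ∈ PrioritySet n) (r : ℕ) (hr : 1 ≤ r)
    (hrn : r ≤ n) : 0 < p r := by
  have hn : (1 : ℝ) ≤ n := by exact_mod_cast (by omega : 1 ≤ n)
  have hn0 : (0 : ℝ) < n := by linarith
  rcases hp with rfl | rfl | rfl
  · exact pow_pos hn0 _
  · exact add_pos (pow_pos hn0 _) (pow_pos hn0 _)
  · have : (n : ℝ) ^ (r - 1) ≤ (n : ℝ) ^ (2 * n) := pow_le_pow_right₀ hn (by omega)
    have := pow_pos hn0 (2 * n)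
    simp only [pFairVec]
    linarith

namespace OSMInstance

variable {n : ℕ}

/-- If all acceptable objects but `h` have value at most `z`, the values of an agent add up to at
most `v i h + (n - 1) * z`. -/
lemma sum_accept_le (I : OSMInstance n) (v : Fin n → Fin n → ℝ) {i h : Fin n} {z : ℝ} (hz : 0 ≤ z)
    (hh : h ∈ I.accept i) (hle : ∀ h' ∈ I.accept i, h' ≠ h → v i h' ≤ z) :
    ∑ h' ∈ I.accept i, v i h' ≤ v i h + (n - 1) * z := by
  rw [← add_sum_erase _ _ hh]
  have h1 : ∑ h' ∈ (I.accept i).erase h, v i h' ≤ ((I.accept i).erase h).card * z := by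
    rw [← nsmul_eq_mul]
    exact sum_le_card_nsmul _ _ _ fun x hx => hle x (mem_of_mem_erase hx) (ne_of_mem_erase hx)
  have h2 : (((I.accept i).erase h).card : ℝ) + 1 ≤ n := by
    have := card_le_univ (I.accept i)
    rw [Fintype.card_fin] at this
    have h3 := card_erase_add_one hh
    exact_mod_cast h3.trans_le this
  nlinarith

lemma one_le_mul_of_edgeRank_eq_one (I : OSMInstance n) {v : Fin n → Fin n → ℝ}
    (hv : I.Consistent v) (hvval : I.UnitSum v ∨ I.UnitRange v) {e : Fin n × Fin n}
    (he : e.2 ∈ I.accept e.1) (hr : I.edgeRank e = 1) : 1 ≤ n * v e.1 e.2 := by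
  have hmax := (I.edgeRank_eq_one_iff hv he).1 hr
  rcases hvval with h | h
  · have := I.sum_accept_le v (hv.1 e.1 e.2).1 he fun h' hh' _ => hmax h' hh'
    rw [h e.1] at this
    linarith
  · obtain ⟨k, hk, hk1⟩ := (h e.1).1
    have h1 := hmax k hk
    have hn : (1 : ℝ) ≤ n := by exact_mod_cast Fin.pos e.1
    nlinarith

lemma single_le_SW (I : OSMInstance n) {v : Fin n → Fin n → ℝ} (hv : I.Consistent v)
    {μ : Finset (Fin n × Fin n)} {e : Fin n × Fin n} (he : e ∈ μ) : v e.1 e.2 ≤ I.SW v μ :=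
  single_le_sum (f := fun e : Fin n × Fin n => v e.1 e.2) (fun e _ => (hv.1 e.1 e.2).1) he

lemma pair_le_SW (I : OSMInstance n) {v : Fin n → Fin n → ℝ} (hv : I.Consistent v)
    {μ : Finset (Fin n × Fin n)} {e e' : Fin n × Fin n} (he : e ∈ μ) (he' : e' ∈ μ)
    (hne : e ≠ e') : v e.1 e.2 + v e'.1 e'.2 ≤ I.SW v μ := by
  rw [← sum_pair (f := fun e : Fin n × Fin n => v e.1 e.2) hne]
  refine sum_le_sum_of_subset_of_nonneg ?_ fun e _ _ => (hv.1 e.1 e.2).1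
  intro x hx
  rcases mem_insert.1 hx with rfl | hx
  · exact he
  · rw [mem_singleton.1 hx]; exact he'

/-- Lower bound on the welfare of a priority matching that also maximizes, among priority matchings,
a rounded version `g` of the values. -/
lemma two_mul_le_sq_mul_SW (I : OSMInstance n) (hn : 2 ≤ n)
    {p : ℕ → ℝ} (hanti : ∀ r s, 1 ≤ r → r < s → s ≤ n → p s < p r)
    (hpos : ∀ r, 1 ≤ r → r ≤ n → 0 < p r)
    {v : Fin n → Fin n → ℝ} (hv : I.Consistent v) (hvval : I.UnitSum v ∨ I.UnitRange v)
    {g : Fin n × Fin n → ℝ} (hgv : ∀ e, e.2 ∈ I.accept e.1 → g e ≤ v e.1 e.2)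
    (hvg : ∀ e, e.2 ∈ I.accept e.1 → 2 ≤ (n : ℝ) ^ 2 * v e.1 e.2 → v e.1 e.2 ≤ 2 * g e)
    {μ : Finset (Fin n × Fin n)} (hμp : I.IsPriorityMatching p μ)
    (hμ : I.IsMaxWeightMatching (fun e => p (I.edgeRank e) + g e) μ) :
    2 * ((n : ℝ) - 1) ≤ (n : ℝ) ^ 2 * I.SW v μ := by
  have : Nonempty (Fin n) := ⟨⟨0, by omega⟩⟩
  have hnR : (2 : ℝ) ≤ n := by exact_mod_cast hn
  have htop := I.exists_edgeRank_eq_one hv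
  obtain ⟨⟨a, h⟩, hah, hr⟩ := hμp.exists_edgeRank_eq_one hanti hpos htop
  have hacc := hμ.1.1 _ hah
  have hx := I.single_le_SW hv hah
  have hx1 := I.one_le_mul_of_edgeRank_eq_one hv hvval hacc hr
  have hmax := (I.edgeRank_eq_one_iff hv hacc).1 hr
  simp only at hacc hx hx1 hmax
  by_cases huniq : ∀ e ∈ μ, I.edgeRank e = 1 → e = (a, h)
  swap
  · push Not at huniq
    obtain ⟨e, he, her, hne⟩ := huniq
    have h1 := I.pair_le_SW hv he hah hne
    have h2 := I.one_le_mul_of_edgeRank_eq_one hv hvval (hμ.1.1 _ he) her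
    simp only at h1
    nlinarith
  have hone : v a h = 1 → 2 * ((n : ℝ) - 1) ≤ (n : ℝ) ^ 2 * I.SW v μ := by
    intro h1
    rw [h1] at hx
    nlinarith
  rcases hvval with hsum | hrange
  swap
  · obtain ⟨k, hk, hk1⟩ := (hrange a).1
    exact hone (le_antisymm (hv.1 a h).2 (hk1 ▸ hmax k hk))
  rcases ((I.accept a).erase h).eq_empty_or_nonempty with hemp | hne
  · apply hone
    rw [← hsum a, ← insert_erase hacc, hemp]
    simp
  obtain ⟨k, hk, hkmax⟩ := exists_max_image _ (v a) hne
  obtain ⟨hkh, hkacc⟩ := mem_erase.1 hk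
  have hkrank : I.edgeRank (a, k) ≤ 2 := by
    rw [I.edgeRank_eq_card hv hkacc]
    have : (I.accept a).filter (fun h' => v a k < v a h') ⊆ {h} := by
      intro h' hh'
      rw [mem_filter] at hh'
      by_contra hne
      exact absurd (hkmax h' (mem_erase.2 ⟨by simpa using hne, hh'.1⟩)) (not_le.2 hh'.2)
    have := card_le_card this
    rw [card_singleton] at this
    omega
  obtain ⟨j, y, μ', hja, hjk, hjr, hy, hyr, hμ', hw⟩ :=
    hμp.exists_swap hanti hpos htop hah hr huniq hkacc hkh hkrank
  have hjkacc := hμ.1.1 _ hjk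
  simp only at hjkacc
  have hS := I.pair_le_SW hv hah hjk (fun h => hja (congrArg Prod.fst h).symm)
  simp only at hS
  have hxz : 1 ≤ v a h + (n - 1) * v a k := by
    have := I.sum_accept_le v (hv.1 a k).1 hacc fun h' hh' hne =>
      hkmax h' (mem_erase.2 ⟨hne, hh'⟩)
    rwa [hsum a] at this
  have hymax := (I.edgeRank_eq_one_iff hv hy).1 hyr
  have hyw : 1 ≤ v j y + (n - 1) * v j k := by
    rw [I.edgeRank_eq_card hv hjkacc] at hjr
    obtain ⟨b, hb⟩ := card_eq_one.1 (by omega :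
      ((I.accept j).filter (fun h' => v j k < v j h')).card = 1)
    have hbm := mem_filter.1 (hb ▸ mem_singleton_self b)
    have := I.sum_accept_le v (hv.1 j k).1 hbm.1 fun h' hh' hne => by
      by_contra! hlt
      have : h' ∈ (I.accept j).filter (fun h' => v j k < v j h') := mem_filter.2 ⟨hh', hlt⟩
      rw [hb] at this
      exact hne (mem_singleton.1 this)
    rw [hsum j] at this
    linarith [hymax b hbm.1]
  have hy1 := I.one_le_mul_of_edgeRank_eq_one hv (Or.inl hsum) hy hyr
  simp only at hy1
  by_contra! hcon
  have hgy : v j y ≤ 2 * g (j, y) := hvg (j, y) hy (by simp only; nlinarith)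
  have hgz : v a k ≤ 2 * g (a, k) := hvg (a, k) hkacc (by
    simp only
    have hxs : (n : ℝ) ^ 2 * v a h < 2 * (n - 1) := by nlinarith
    have h3 : (n : ℝ) ^ 2 - 2 * (n - 1) ≤ (n - 1) * ((n : ℝ) ^ 2 * v a k) := by
      nlinarith [mul_le_mul_of_nonneg_left hxz (sq_nonneg (n : ℝ))]
    have h4 : (n - 1) * 2 ≤ ((n : ℝ) - 1) * ((n : ℝ) ^ 2 * v a k) := by
      nlinarith [sq_nonneg ((n : ℝ) - 2)]
    exact le_of_mul_le_mul_left h4 (by linarith))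
  have hgx := hgv (a, h) hacc
  have hgw := hgv (j, k) hjkacc
  simp only at hgx hgw
  have hg : g (a, k) + g (j, y) ≤ g (a, h) + g (j, k) := by
    have h1 := hw (fun e => p (I.edgeRank e) + g e)
    have h2 := hμ.2 μ' hμ'
    simp only [hr, hjr, hyr] at h1
    have hk2 : p 2 ≤ p (I.edgeRank (a, k)) := by
      rcases eq_or_lt_of_le hkrank with hr | hr
      · rw [hr]
      · exact (hanti _ _ (I.one_le_edgeRank _) hr hn).le
    linarith
  set x := v a h
  set z := v a k
  set w := v j k
  set y' := v j y
  set S := I.SW v μ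
  have hsw : y' + z ≤ 2 * (x + w) := by linarith
  have h2 : 2 ≤ ((n : ℝ) + 1) * (x + w) := by
    have hm : (0 : ℝ) < n - 1 := by linarith
    have e1 : (n - 1) * (1 - (n - 1) * w) + (1 - x) ≤ 2 * ((n : ℝ) - 1) * (x + w) := by
      nlinarith
    have e2 : 0 ≤ ((n : ℝ) - 2) * (n * x - 1) := mul_nonneg (by linarith) (by linarith)
    have e3 : ((n : ℝ) - 1) * 2 ≤ (n - 1) * ((n + 1) * (x + w)) := by nlinarith
    exact le_of_mul_le_mul_left e3 hm
  have h3 : 2 ≤ ((n : ℝ) + 1) * S := by nlinarith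
  nlinarith

lemma IsMaxWeightMatching.isPriorityMatching {I : OSMInstance n} {p : ℕ → ℝ}
    (hp : p ∈ PrioritySet n) {g : Fin n × Fin n → ℝ}
    (hg0 : ∀ e, e.2 ∈ I.accept e.1 → 0 ≤ g e) (hg1 : ∀ e, e.2 ∈ I.accept e.1 → g e < 1)
    {μ : Finset (Fin n × Fin n)}
    (hμ : I.IsMaxWeightMatching (fun e => p (I.edgeRank e) + g e) μ) :
    I.IsPriorityMatching p μ := by
  refine ⟨hμ.1, fun μ' hμ' => ?_⟩
  by_contra! hlt
  have hgap := I.priority_weight_gap hp hμ.1 hμ' hlt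
  have hmax := hμ.2 μ' hμ'
  have hne : μ.Nonempty ∨ μ = ∅ := μ.eq_empty_or_nonempty.symm
  simp only [weightSum, sum_add_distrib] at hlt hgap hmax
  have h1 : 0 ≤ ∑ e ∈ μ', g e := sum_nonneg fun e he => hg0 e (hμ'.1 e he)
  have hcard : (μ.card : ℝ) ≤ n := by exact_mod_cast hμ.1.card_le
  rcases hne with hne | rfl
  · have h2 : ∑ e ∈ μ, g e < ∑ e ∈ μ, 1 :=
      sum_lt_sum_of_nonempty hne fun e he => hg1 e (hμ.1.1 e he)
    simp only [sum_const, nsmul_eq_mul, mul_one] at h2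
    linarith
  · simp only [sum_empty] at *
    linarith

end OSMInstance

/-- the adaptive threshold algorithm achieves a `(1+ε)`-approximation to the
optimal welfare among priority-`p` matchings, for `p ∈ 𝕡` and unit-sum or unit-range
valuations. -/
theorem adaptive_approx_priority {n : ℕ} (I : OSMInstance n)
    (ε : ℝ) (hε : 0 < ε) (hε2 : ε ≤ 2)
    (p : ℕ → ℝ) (hp : p ∈ PrioritySet n)
    (v : Fin n → Fin n → ℝ) (hv : I.Consistent v)
    (hvval : I.UnitSum v ∨ I.UnitRange v)
    (c : ℕ) (hc : c = ⌈Real.log ((n : ℝ) ^ 2 * (1 / ε)) / Real.log (1 + ε / 2)⌉₊)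
    (t : ℕ → ℝ) (ht : ∀ k, t k = (2 / (2 + ε)) ^ k)
    (val' : Fin n × Fin n → ℝ)
    (hval' : ∀ i h, h ∈ I.accept i →
      (∃ k, 1 ≤ k ∧ k ≤ c ∧ t k ≤ v i h ∧ (k = 1 ∨ v i h < t (k - 1)) ∧
        val' (i, h) = t k) ∨
      (v i h < t c ∧ val' (i, h) = 0))
    (μ : Finset (Fin n × Fin n))
    (hμ : I.IsMaxWeightMatching (fun e => p (I.edgeRank e) + val' e) μ)
    (μstar : Finset (Fin n × Fin n)) (hstar : I.IsPriorityMatching p μstar)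
    (hstaropt : ∀ μ'', I.IsPriorityMatching p μ'' → I.SW v μ'' ≤ I.SW v μstar) :
    I.IsPriorityMatching p μ ∧ I.SW v μstar ≤ (1 + ε) * I.SW v μ := by
  have hb : 0 < 1 + ε / 2 := by linarith
  have hbase : 2 / (2 + ε) = (1 + ε / 2)⁻¹ := by
    field_simp
  have htinv : ∀ k, t k = ((1 + ε / 2) ^ k)⁻¹ := fun k => by rw [ht, hbase, inv_pow]
  have htpos : ∀ k, 0 < t k := fun k => by rw [htinv]; positivity
  have htsucc : ∀ k, t k = (1 + ε / 2) * t (k + 1) := fun k => by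
    rw [htinv, htinv, pow_succ]
    field_simp
  have ht1 : ∀ k, 1 ≤ k → t k < 1 := fun k hk => by
    rw [htinv]
    exact inv_lt_one_of_one_lt₀ (one_lt_pow₀ (by linarith) (by omega))
  have hg0 : ∀ e : Fin n × Fin n, e.2 ∈ I.accept e.1 → 0 ≤ val' e := by
    intro e he
    rcases hval' e.1 e.2 he with ⟨k, -, -, -, -, h⟩ | ⟨-, h⟩
    · exact h ▸ (htpos k).le
    · exact h.ge
  have hg1 : ∀ e : Fin n × Fin n, e.2 ∈ I.accept e.1 → val' e < 1 := by
    intro e he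
    rcases hval' e.1 e.2 he with ⟨k, hk, -, -, -, h⟩ | ⟨-, h⟩
    · exact h ▸ ht1 k hk
    · exact h.trans_lt one_pos
  have hgv : ∀ e : Fin n × Fin n, e.2 ∈ I.accept e.1 → val' e ≤ v e.1 e.2 := by
    intro e he
    rcases hval' e.1 e.2 he with ⟨k, -, -, hk, -, h⟩ | ⟨-, h⟩
    · exact h.trans_le hk
    · exact h.trans_le (hv.1 e.1 e.2).1
  have hbig : ∀ e : Fin n × Fin n, e.2 ∈ I.accept e.1 → t c ≤ v e.1 e.2 →
      v e.1 e.2 ≤ (1 + ε / 2) * val' e := by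
    intro e he hle
    rcases hval' e.1 e.2 he with ⟨k, hk1, -, -, hk, h⟩ | ⟨hlt, -⟩
    · have h' : val' e = t k := h
      obtain ⟨m, rfl⟩ : ∃ m, k = m + 1 := ⟨k - 1, by omega⟩
      rw [h', ← htsucc]
      rcases hk with hk | hk
      · have hm : m = 0 := by omega
        rw [hm, ht, pow_zero]
        exact (hv.1 e.1 e.2).2
      · exact hk.le
    · exact absurd hle (not_le.2 hlt)
  have hprio : I.IsPriorityMatching p μ := hμ.isPriorityMatching hp hg0 hg1
  refine ⟨hprio, ?_⟩
  rcases Nat.eq_zero_or_pos n with rfl | hn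
  · rw [Subsingleton.elim μ ∅, Subsingleton.elim μstar ∅]
    simp [OSMInstance.SW]
  have : Nonempty (Fin n) := ⟨⟨0, hn⟩⟩
  have hanti := PrioritySet.strictAnti hp
  have hpos := PrioritySet.pos hp
  have htop := I.exists_edgeRank_eq_one hv
  rcases eq_or_lt_of_le (Nat.succ_le_of_lt hn) with h1 | hn2
  · obtain ⟨e, he, her⟩ := hprio.exists_edgeRank_eq_one hanti hpos htop
    have h2 := I.one_le_mul_of_edgeRank_eq_one hv hvval (hμ.1.1 e he) her
    have h3 := I.single_le_SW hv he
    have h4 : I.SW v μstar ≤ μstar.card * 1 := by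
      rw [← nsmul_eq_mul]
      exact sum_le_card_nsmul _ _ _ fun e _ => (hv.1 e.1 e.2).2
    have h5 : (μstar.card : ℝ) ≤ n := by exact_mod_cast hstar.1.card_le
    have hn1 : (n : ℝ) = 1 := by exact_mod_cast h1.symm
    rw [hn1] at h2 h5
    nlinarith
  have hnR : (2 : ℝ) ≤ n := by exact_mod_cast hn2
  have hnpos : (0 : ℝ) < n := by linarith
  have htc : (n : ℝ) ^ 2 * t c ≤ ε := by
    have hlog : 0 < Real.log (1 + ε / 2) := Real.log_pos (by linarith)
    have h1 := Nat.le_ceil (Real.log ((n : ℝ) ^ 2 * (1 / ε)) / Real.log (1 + ε / 2))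
    rw [← hc, div_le_iff₀ hlog, ← Real.log_pow] at h1
    have h2 := (Real.log_le_log_iff (by positivity) (by positivity)).1 h1
    rw [htinv, ← div_eq_mul_inv, div_le_iff₀ (by positivity)]
    rw [mul_one_div, div_le_iff₀ hε] at h2
    linarith
  have hSW : 2 * ((n : ℝ) - 1) ≤ (n : ℝ) ^ 2 * I.SW v μ := by
    refine I.two_mul_le_sq_mul_SW hn2 hanti hpos hv hvval hgv (fun e he h => ?_) hprio hμ
    have h1 : t c ≤ v e.1 e.2 :=
      le_of_mul_le_mul_left (htc.trans (hε2.trans h)) (by positivity)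
    have h2 := hbig e he h1
    have h3 := hg0 e he
    nlinarith
  obtain ⟨e₀, he₀, hr₀⟩ := hstar.exists_edgeRank_eq_one hanti hpos htop
  have hv₀ := I.one_le_mul_of_edgeRank_eq_one hv hvval (hstar.1.1 e₀ he₀) hr₀
  have hbig₀ : v e₀.1 e₀.2 ≤ (1 + ε / 2) * val' e₀ := by
    refine hbig e₀ (hstar.1.1 e₀ he₀) (le_of_mul_le_mul_left (htc.trans ?_)
      (by positivity : (0 : ℝ) < (n : ℝ) ^ 2))
    nlinarith
  have hstarle : I.SW v μstar ≤ (1 + ε / 2) * ∑ e ∈ μstar, val' e + (n - 1) * t c := by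
    have h1 : ∑ e ∈ μstar.erase e₀, v e.1 e.2 ≤
        ∑ e ∈ μstar.erase e₀, ((1 + ε / 2) * val' e + t c) := by
      refine sum_le_sum fun e he => ?_
      have hacc := hstar.1.1 e (mem_of_mem_erase he)
      rcases le_total (t c) (v e.1 e.2) with h | h
      · linarith [hbig e hacc h, htpos c]
      · nlinarith [hg0 e hacc]
    rw [sum_add_distrib, ← mul_sum, sum_const, nsmul_eq_mul] at h1
    have h2 : ((μstar.erase e₀).card : ℝ) + 1 ≤ n := by
      exact_mod_cast (card_erase_add_one he₀).trans_le hstar.1.card_le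
    have h3 := mul_le_mul_of_nonneg_right h2 (htpos c).le
    unfold OSMInstance.SW
    rw [← add_sum_erase _ _ he₀, ← add_sum_erase _ val' he₀]
    linarith
  have hval : ∑ e ∈ μstar, val' e ≤ I.SW v μ := by
    have h1 := hμ.2 μstar hstar.1
    have h2 := hstar.2 μ hμ.1
    simp only [OSMInstance.weightSum, sum_add_distrib] at h1 h2
    have h3 : ∑ e ∈ μ, val' e ≤ I.SW v μ := sum_le_sum fun e he => hgv e (hμ.1.1 e he)
    linarith
  have hsmall : ((n : ℝ) - 1) * t c ≤ ε / 2 * I.SW v μ := by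
    refine le_of_mul_le_mul_left ?_ (by positivity : (0 : ℝ) < (n : ℝ) ^ 2)
    nlinarith [mul_le_mul_of_nonneg_left htc (by linarith : (0 : ℝ) ≤ n - 1),
      mul_le_mul_of_nonneg_left hSW hε.le]
  nlinarith [mul_le_mul_of_nonneg_left hval hb.le]
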